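/- For every c ≥ 0, every ε ≥ 0, and every Δ ∈ ℝ, exp(−2c·max(0, |Δ| − ε)) = (∫_0^∞ (2πλ)^{−1/2} exp(−(λ + c(Δ − ε))²/(2λ)) dλ) · (∫_0^∞ (2πω)^{−1/2} exp(−(ω − c(Δ + ε))²/(2ω)) dω). -/

import Mathlib

open MeasureTheory Real

/-!
Substituting `l = x ^ 2` and completing the square with `|u|` turns the scale mixture
`∫ l > 0, (2πl)^(-1/2) exp (-(l + u)² / (2l))` into `exp (-u - |u|) = exp (-2 max(0, u))` times a
Gaussian integral in `x - |u| / x`. By the Cauchy–Schlömilch transformation the latter equals the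
integral in `x` itself, so the mixture is exactly `exp (-2 max(0, u))`. The two factors of the
theorem are then the hinge losses of `Δ - ε` and `-(Δ + ε)`, at most one of which is nonzero; their
sum is the `ε`-insensitive loss.
-/

section

open Set

theorem strictMonoOn_sub_div {a : ℝ} (ha : 0 ≤ a) :
    StrictMonoOn (fun x : ℝ ↦ x - a / x) (Ioi 0) := fun _ hx _ _ hxy ↦
  (sub_lt_sub_right hxy _).trans_le (sub_le_sub_left (div_le_div_of_nonneg_left ha hx hxy.le) _)

theorem image_sub_div_Ioi {a : ℝ} (ha : 0 < a) : (fun x : ℝ ↦ x - a / x) '' Ioi 0 = univ := by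
  refine eq_univ_of_forall fun y ↦ ?_
  have hdisc : √(y ^ 2 + 4 * a) ^ 2 = y ^ 2 + 4 * a := sq_sqrt (by positivity)
  have hpos : 0 < y + √(y ^ 2 + 4 * a) := by
    have : |y| < √(y ^ 2 + 4 * a) := lt_sqrt_of_sq_lt (by rw [sq_abs]; linarith)
    linarith [neg_abs_le y]
  refine ⟨(y + √(y ^ 2 + 4 * a)) / 2, half_pos hpos, ?_⟩
  field_simp
  linear_combination hdisc

theorem hasDerivAt_const_div (a : ℝ) {x : ℝ} (hx : x ≠ 0) :
    HasDerivAt (fun x : ℝ ↦ a / x) (-(a / x ^ 2)) x := by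
  simpa [div_eq_mul_inv] using (hasDerivAt_inv hx).const_mul a

theorem hasDerivAt_sub_div (a : ℝ) {x : ℝ} (hx : x ≠ 0) :
    HasDerivAt (fun x : ℝ ↦ x - a / x) (1 + a / x ^ 2) x := by
  simpa only [sub_neg_eq_add] using (hasDerivAt_id' x).fun_sub (hasDerivAt_const_div a hx)

variable {E : Type*} [NormedAddCommGroup E] [NormedSpace ℝ E]

theorem integral_Ioi_comp_const_div {a : ℝ} (ha : 0 < a) (f : ℝ → E) :
    ∫ x in Ioi 0, (a / x ^ 2) • f (a / x) = ∫ x in Ioi 0, f x := by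
  have hinv : Function.Involutive fun x : ℝ ↦ a / x := fun _ ↦ div_div_cancel₀ ha.ne'
  have himage : (fun x : ℝ ↦ a / x) '' Ioi 0 = Ioi 0 := by
    rw [hinv.image_eq_preimage_symm]
    ext x
    simp [ha]
  have hderiv (x : ℝ) (hx : x ∈ Ioi 0) :
      HasDerivWithinAt (fun x : ℝ ↦ a / x) (-(a / x ^ 2)) (Ioi 0) x :=
    (hasDerivAt_const_div a (ne_of_gt hx)).hasDerivWithinAt
  have hsubst := integral_image_eq_integral_abs_deriv_smul measurableSet_Ioi hderiv
    hinv.injective.injOn f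
  simpa only [himage, abs_neg, abs_of_nonneg (div_nonneg ha.le (sq_nonneg _))] using hsubst.symm

theorem integral_Ioi_one_add_div_sq_smul_comp_sub_div {a : ℝ} (ha : 0 < a) (f : ℝ → E) :
    ∫ x in Ioi 0, (1 + a / x ^ 2) • f (x - a / x) = ∫ x, f x := by
  have habs (x : ℝ) : |1 + a / x ^ 2| = 1 + a / x ^ 2 := abs_of_nonneg (by positivity)
  have hsubst := integral_image_eq_integral_abs_deriv_smul measurableSet_Ioi
    (fun x hx ↦ (hasDerivAt_sub_div a (ne_of_gt hx)).hasDerivWithinAt)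
    (strictMonoOn_sub_div ha.le).injOn f
  simpa only [image_sub_div_Ioi ha, Measure.restrict_univ, habs] using hsubst.symm

theorem integrableOn_Ioi_one_add_div_sq_smul_comp_sub_div_iff {a : ℝ} (ha : 0 < a) {f : ℝ → E} :
    IntegrableOn (fun x ↦ (1 + a / x ^ 2) • f (x - a / x)) (Ioi 0) ↔ Integrable f := by
  have habs (x : ℝ) : |1 + a / x ^ 2| = 1 + a / x ^ 2 := abs_of_nonneg (by positivity)
  have hsubst := integrableOn_image_iff_integrableOn_abs_deriv_smul measurableSet_Ioi
    (fun x hx ↦ (hasDerivAt_sub_div a (ne_of_gt hx)).hasDerivWithinAt)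
    (strictMonoOn_sub_div ha.le).injOn f
  simpa only [image_sub_div_Ioi ha, integrableOn_univ, habs] using hsubst.symm

theorem integrableOn_Ioi_comp_sub_div {a : ℝ} (ha : 0 < a) {f : ℝ → E} (hf : Integrable f) :
    IntegrableOn (fun x ↦ f (x - a / x)) (Ioi 0) := by
  have hone_le (x : ℝ) : 1 ≤ 1 + a / x ^ 2 := le_add_of_nonneg_right (by positivity)
  have hmeas : Measurable fun x : ℝ ↦ (1 + a / x ^ 2)⁻¹ := by measurability
  have hbdd (x : ℝ) : ‖(1 + a / x ^ 2)⁻¹‖ ≤ 1 := by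
    rw [norm_inv, norm_of_nonneg (zero_le_one.trans (hone_le x))]
    exact inv_le_one_of_one_le₀ (hone_le x)
  have hweighted := (integrableOn_Ioi_one_add_div_sq_smul_comp_sub_div_iff ha).2 hf
  refine (hweighted.bdd_smul 1 hmeas.aestronglyMeasurable (.of_forall hbdd)).congr
    (.of_forall fun x ↦ ?_)
  exact inv_smul_smul₀ (one_pos.trans_le (hone_le x)).ne' _

/-- The Cauchy–Schlömilch transformation. The weight `a / x ^ 2` in the substitution `y = x - a / x`
is absorbed by the inversion `x ↦ a / x`, which turns `x - a / x` into its negative. -/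
theorem integral_Ioi_comp_sub_div_add_integral_Ioi_comp_div_sub {a : ℝ} (ha : 0 ≤ a) {f : ℝ → E}
    (hf : Integrable f) :
    (∫ x in Ioi 0, f (x - a / x)) + ∫ x in Ioi 0, f (a / x - x) = ∫ x, f x := by
  obtain rfl | ha := ha.eq_or_lt
  · simp only [zero_div, sub_zero, zero_sub, integral_comp_neg_Ioi, neg_zero]
    rw [add_comm, intervalIntegral.integral_Iic_add_Ioi hf.integrableOn hf.integrableOn]
  have hinversion : ∫ x in Ioi 0, f (a / x - x) = ∫ x in Ioi 0, (a / x ^ 2) • f (x - a / x) := by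
    simpa only [div_div_cancel₀ ha.ne'] using
      (integral_Ioi_comp_const_div ha fun x ↦ f (a / x - x)).symm
  have hsplit (x : ℝ) :
      (a / x ^ 2) • f (x - a / x) = (1 + a / x ^ 2) • f (x - a / x) - f (x - a / x) := by
    rw [add_smul, one_smul, add_sub_cancel_left]
  calc
    (∫ x in Ioi 0, f (x - a / x)) + ∫ x in Ioi 0, f (a / x - x)
      = (∫ x in Ioi 0, f (x - a / x)) +
          ∫ x in Ioi 0, ((1 + a / x ^ 2) • f (x - a / x) - f (x - a / x)) := by
        simp only [hinversion, hsplit]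
    _ = ∫ x in Ioi 0, (1 + a / x ^ 2) • f (x - a / x) := by
        rw [integral_sub ((integrableOn_Ioi_one_add_div_sq_smul_comp_sub_div_iff ha).2 hf)
          (integrableOn_Ioi_comp_sub_div ha hf), add_sub_cancel]
    _ = ∫ x, f x := integral_Ioi_one_add_div_sq_smul_comp_sub_div ha f

theorem integral_Ioi_exp_neg_mul_sub_div_sq {a b : ℝ} (ha : 0 ≤ a) (hb : 0 < b) :
    ∫ x in Ioi 0, exp (-b * (x - a / x) ^ 2) = √(π / b) / 2 := by
  have hsum := integral_Ioi_comp_sub_div_add_integral_Ioi_comp_div_sub ha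
    (integrable_exp_neg_mul_sq hb)
  simp only [sub_sq_comm (a / _), integral_gaussian] at hsum
  linarith

theorem neg_sq_add_sq_div_two_mul_sq {x : ℝ} (hx : x ≠ 0) (u : ℝ) :
    -(x ^ 2 + u) ^ 2 / (2 * x ^ 2) = -2 * max 0 u + -(1 / 2) * (x - |u| / x) ^ 2 := by
  have hmax : 2 * max 0 u = u + |u| := by grind
  rw [neg_mul, hmax]
  field_simp
  linear_combination sq_abs u

theorem integral_Ioi_gaussian_scale_mixture (u : ℝ) :
    ∫ l in Ioi 0, (1 / √(2 * π * l)) * exp (-(l + u) ^ 2 / (2 * l)) = exp (-2 * max 0 u) := by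
  have hsubst {x : ℝ} (hx : x ∈ Ioi 0) :
      (2 * x ^ (2 - 1 : ℝ)) •
          (1 / √(2 * π * x ^ (2 : ℝ)) * exp (-(x ^ (2 : ℝ) + u) ^ 2 / (2 * x ^ (2 : ℝ)))) =
        exp (-2 * max 0 u) * (2 / √(2 * π)) * exp (-(1 / 2) * (x - |u| / x) ^ 2) := by
    replace hx : 0 < x := hx
    rw [rpow_two, show (2 - 1 : ℝ) = 1 by norm_num, rpow_one, smul_eq_mul,
      neg_sq_add_sq_div_two_mul_sq hx.ne', exp_add, sqrt_mul (by positivity), sqrt_sq hx.le]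
    field_simp
  have hnormalize : 2 / √(2 * π) * (√(π / (1 / 2)) / 2) = 1 := by
    rw [div_div_eq_mul_div, div_one, mul_comm π]
    field_simp
  rw [← integral_comp_rpow_Ioi_of_pos two_pos, setIntegral_congr_fun measurableSet_Ioi @hsubst,
    integral_const_mul, integral_Ioi_exp_neg_mul_sub_div_sq (abs_nonneg u) one_half_pos, mul_assoc,
    hnormalize, mul_one]

end

theorem max_zero_abs_sub {α : Type*} [AddCommGroup α] [LinearOrder α] [IsOrderedAddMonoid α]
    {ε : α} (hε : 0 ≤ ε) (x : α) :
    max 0 (|x| - ε) = max 0 (x - ε) + max 0 (-(x + ε)) := by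
  obtain hx | hx := le_total 0 x
  · rw [abs_of_nonneg hx, max_eq_left (neg_nonpos.2 (add_nonneg hx hε)), add_zero]
  · rw [abs_of_nonpos hx, max_eq_left (sub_nonpos.2 (hx.trans hε)), zero_add, neg_add']

/-- Dual Scale Mixture Representation: for `c ≥ 0`, `ε ≥ 0` and `Δ ∈ ℝ`,
`exp(-2c·max(0, |Δ| - ε))` equals the product of two scale-mixture-of-Gaussians integrals. -/
theorem dual_scale_mixture_representation (c ε Δ : ℝ) (hc : 0 ≤ c) (hε : 0 ≤ ε) :
    Real.exp (-2 * c * max 0 (|Δ| - ε)) =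
      (∫ l in Set.Ioi (0 : ℝ),
        (1 / Real.sqrt (2 * Real.pi * l)) * Real.exp (-(l + c * (Δ - ε)) ^ 2 / (2 * l))) *
      (∫ w in Set.Ioi (0 : ℝ),
        (1 / Real.sqrt (2 * Real.pi * w)) * Real.exp (-(w - c * (Δ + ε)) ^ 2 / (2 * w))) := by
  have hloss : c * max 0 (|Δ| - ε) = max 0 (c * (Δ - ε)) + max 0 (-(c * (Δ + ε))) := by
    rw [max_zero_abs_sub hε, mul_add, mul_max_of_nonneg _ _ hc, mul_max_of_nonneg _ _ hc, mul_zero,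
      mul_neg]
  rw [mul_assoc, hloss, mul_add, exp_add, ← integral_Ioi_gaussian_scale_mixture (c * (Δ - ε)),
    ← integral_Ioi_gaussian_scale_mixture (-(c * (Δ + ε)))]
  simp only [← sub_eq_add_neg]
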